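/- arXiv:1210.0450 — 4 statements merged into one kernel-verified Lean document; each statement's English description precedes it below -/
import Mathlib

section
/- Let n and n + δ both be perfect numbers. If δ > 1 is odd, then δ does not divide n. -/
/-- Euler's half of the Euclid-Euler theorem. -/
theorem even_perfect_form (n : ℕ) (hn : Nat.Perfect n) (he : Even n) :
    ∃ k M : ℕ, 1 ≤ k ∧ M + 1 = 2 ^ (k + 1) ∧ Nat.Prime M ∧ n = 2 ^ k * M := by
  have hpos : 0 < n := hn.2
  obtain ⟨k, m, hm, rfl⟩ := Nat.exists_eq_two_pow_mul_odd hpos.ne'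
  have hmpos : 0 < m := hm.pos
  have hk : 1 ≤ k := by
    rcases Nat.eq_zero_or_pos k with rfl | h
    · rw [pow_zero, one_mul] at he
      exact absurd he (Nat.not_even_iff_odd.mpr hm)
    · exact h
  have hs := (Nat.perfect_iff_sum_divisors_eq_two_mul hpos).1 hn
  have hcop : Nat.Coprime (2 ^ k) m := Nat.Coprime.pow_left k hm.coprime_two_left
  rw [hcop.sum_divisors_mul, Nat.sum_divisors_prime_pow Nat.prime_two] at hs
  have hg : (∑ i ∈ Finset.range (k + 1), 2 ^ i) + 1 = 2 ^ (k + 1) := by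
    have := Nat.geomSum_eq (le_refl 2) (k + 1)
    have h2 : 0 < 2 ^ (k + 1) := by positivity
    simp only [Nat.reduceSub, Nat.div_one] at this
    omega
  set N := ∑ i ∈ Finset.range (k + 1), 2 ^ i with hN
  have h4 : 4 ≤ 2 ^ (k + 1) := by
    calc 4 = 2 ^ 2 := by norm_num
      _ ≤ 2 ^ (k + 1) := Nat.pow_le_pow_right (by norm_num) (by omega)
  rw [Nat.sum_divisors_eq_sum_properDivisors_add_self] at hs
  set c := ∑ i ∈ m.properDivisors, i with hc
  have hmc : m = N * c := by
    have h1 : 2 * (2 ^ k * m) = (N + 1) * m := by rw [hg]; ring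
    rw [h1] at hs
    nlinarith
  have hdvd : c ∣ m := ⟨N, by rw [hmc]; ring⟩
  have hcm : c = 1 := by
    rcases Nat.sum_properDivisors_dvd hdvd with h | h
    · exact h
    · rw [← hc] at h
      exfalso
      have : 3 ≤ N := by omega
      nlinarith
  refine ⟨k, m, hk, ?_, ?_, rfl⟩
  · rw [hmc, hcm, mul_one, hg]
  · exact Nat.sum_properDivisors_eq_one_iff_prime.1 hcm

theorem no_perfect_mul (M t : ℕ) (hM : Nat.Prime M) (h4 : 4 ∣ M + 1) (hc : Nat.Coprime M t)
    (ho : Odd (M * t)) (hp : Nat.Perfect (M * t)) : False := by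
  have hs := (Nat.perfect_iff_sum_divisors_eq_two_mul hp.2).1 hp
  rw [hc.sum_divisors_mul, hM.sum_divisors] at hs
  have : 4 ∣ 2 * (M * t) := by
    rw [← hs]
    exact Dvd.dvd.mul_right (by simpa [add_comm] using h4) _
  obtain ⟨r, hr⟩ := ho
  omega

theorem stmt_2 (n δ : ℕ) (hδ : 1 < δ) (hodd : Odd δ)
    (hn : Nat.Perfect n) (hnδ : Nat.Perfect (n + δ)) :
    ¬ δ ∣ n := by
  intro hd
  have key : ∀ E, Nat.Perfect E → Even E → δ ∣ E →
      ∃ k, 1 ≤ k ∧ δ + 1 = 2 ^ (k + 1) ∧ Nat.Prime δ ∧ E = 2 ^ k * δ := by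
    intro E hE he hdE
    obtain ⟨k, M, hk, hM, hMp, rfl⟩ := even_perfect_form E hE he
    have h1 : δ ∣ M :=
      (Nat.Coprime.pow_right k hodd.coprime_two_right).dvd_of_dvd_mul_left hdE
    rcases (Nat.dvd_prime hMp).1 h1 with h | h
    · omega
    · subst h
      exact ⟨k, hk, hM, hMp, rfl⟩
  have four : ∀ k, 1 ≤ k → δ + 1 = 2 ^ (k + 1) → 4 ∣ δ + 1 := by
    intro k hk h
    rw [h]
    exact pow_dvd_pow 2 (show 2 ≤ k + 1 by omega)
  rcases Nat.even_or_odd n with he | ho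
  · obtain ⟨k, hk, hM, hp, hE⟩ := key n hn he hd
    have hO : n + δ = δ * (2 ^ k + 1) := by rw [hE]; ring
    have hoddO : Odd (n + δ) := he.add_odd hodd
    rw [hO] at hnδ hoddO
    by_cases hdv : δ ∣ 2 ^ k + 1
    · have h3 : δ ∣ 3 := by
        have h2 : δ ∣ δ + 3 := by
          have : δ + 3 = 2 * (2 ^ k + 1) := by
            rw [pow_succ] at hM; omega
          rw [this]
          exact hdv.mul_left 2
        exact (Nat.dvd_add_right (dvd_refl δ)).1 h2
      have : δ = 3 := by
        rcases (Nat.dvd_prime Nat.prime_three).1 h3 with h | h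
        · omega
        · exact h
      subst this
      have hk2 : 2 ^ k = 2 := by rw [pow_succ] at hM; omega
      rw [hk2] at hnδ
      revert hnδ
      unfold Nat.Perfect
      decide
    · exact no_perfect_mul δ _ hp (four k hk hM) ((Nat.Prime.coprime_iff_not_dvd hp).2 hdv)
        hoddO hnδ
  · obtain ⟨k, hk, hM, hp, hE⟩ := key (n + δ) hnδ (ho.add_odd hodd) (hd.add (dvd_refl δ))
    obtain ⟨t, rfl⟩ := hd
    have ht : t + 1 = 2 ^ k := by
      have : δ * (t + 1) = δ * 2 ^ k := by rw [mul_add, mul_one, hE, mul_comm]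
      exact Nat.eq_of_mul_eq_mul_left (by omega) this
    refine no_perfect_mul δ t hp (four k hk hM) ((Nat.Prime.coprime_iff_not_dvd hp).2 ?_) ho hn
    intro hdt
    have htpos : 0 < t := by
      rcases Nat.eq_zero_or_pos t with rfl | h
      · simp at ho
      · exact h
    have := Nat.le_of_dvd htpos hdt
    rw [pow_succ] at hM
    omega
end

section
/- Let s be a natural number with s ≢ 2 (mod 3) such that 96s + 91 is prime, and let δ = (24s + 23)(48s + 45). Then there are no perfect numbers x and y with x - y = δ. -/
/-- Pairing divisors `d` and `n / d`. -/
theorem sum_div_pair (n N : ℕ) (hn : n ≠ 0)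
    (h : ∀ d e : ℕ, d * e = n → ((d : ZMod N) + (e : ZMod N) = 0 ∧ d ≠ e)) :
    N ∣ ∑ d ∈ n.divisors, d := by
  rw [← ZMod.natCast_eq_zero_iff]
  push_cast
  refine Finset.sum_involution (fun d _ => n / d) ?_ ?_ ?_ ?_
  · intro d hd
    exact (h d (n / d) (Nat.mul_div_cancel' (Nat.dvd_of_mem_divisors hd))).1
  · intro d hd _
    exact (h d (n / d) (Nat.mul_div_cancel' (Nat.dvd_of_mem_divisors hd))).2.symm
  · intro d hd
    exact Nat.mem_divisors.2 ⟨Nat.div_dvd_of_dvd (Nat.dvd_of_mem_divisors hd), hn⟩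
  · intro d hd
    exact Nat.div_div_self (Nat.dvd_of_mem_divisors hd) hn

theorem four_dvd_sum (n : ℕ) (h3 : n % 4 = 3) : 4 ∣ ∑ d ∈ n.divisors, d := by
  apply sum_div_pair n 4 (by omega)
  intro d e hde
  have key : (d : ZMod 4) * (e : ZMod 4) = 3 := by
    rw [← Nat.cast_mul, hde, ← Nat.mod_add_div n 4, h3]
    push_cast
    rw [show (4 : ZMod 4) = 0 from rfl]
    simp
  have h1 : ∀ u v : ZMod 4, u * v = 3 → u + v = 0 ∧ u ≠ v := by decide
  obtain ⟨p, q⟩ := h1 _ _ key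
  exact ⟨p, fun h => q (by rw [h])⟩

theorem two_dvd_sum (n : ℕ) (h2 : n % 2 = 1) (h3 : n % 3 = 2) :
    2 ∣ ∑ d ∈ n.divisors, d := by
  apply sum_div_pair n 2 (by omega)
  intro d e hde
  constructor
  · have hodd : Odd (d * e) := by rw [hde]; exact Nat.odd_iff.2 h2
    obtain ⟨ho, ho'⟩ := Nat.odd_mul.1 hodd
    have : Even (d + e) := ho.add_odd ho'
    rw [← Nat.cast_add, ZMod.natCast_eq_zero_iff]
    exact this.two_dvd
  · rintro rfl
    rw [← hde, Nat.mul_mod] at h3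
    have : d % 3 < 3 := Nat.mod_lt _ (by norm_num)
    interval_cases d % 3 <;> omega

theorem perfect_sum {n : ℕ} (h : n.Perfect) : ∑ d ∈ n.divisors, d = 2 * n :=
  (Nat.perfect_iff_sum_divisors_eq_two_mul h.2).1 h

theorem perfect_no3 (n C D : ℕ) (h : n.Perfect) (ho : n % 2 = 1) (hn : n = C * D)
    (hcop : C.Coprime D) (hC : C % 4 = 3) : False := by
  have h1 := perfect_sum h
  have h2 : ∑ d ∈ n.divisors, d = (∑ d ∈ C.divisors, d) * ∑ d ∈ D.divisors, d := by
    rw [hn, hcop.sum_divisors_mul]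
  have h3 : 4 ∣ ∑ d ∈ n.divisors, d := h2 ▸ (four_dvd_sum C hC).mul_right _
  omega

theorem even_perfect (x : ℕ) (h : x.Perfect) (he : x % 2 = 0) :
    x = 6 ∨ ∃ c, x = c * (2 * c - 1) ∧ c % 4 = 0 ∧ c % 3 = 1 := by
  have hx0 : x ≠ 0 := h.2.ne'
  obtain ⟨k, m, hm, hx⟩ := Nat.exists_eq_two_pow_mul_odd hx0
  have hk : k ≠ 0 := by
    rintro rfl
    rw [pow_zero, one_mul] at hx
    have := Nat.odd_iff.1 hm
    omega
  obtain ⟨j, rfl⟩ := Nat.exists_eq_succ_of_ne_zero hk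
  have hm1 := Nat.odd_iff.1 hm
  have h1 := perfect_sum h
  have hc : Nat.Coprime (2 ^ (j + 1)) m := (Nat.coprime_two_left.2 hm).pow_left _
  rw [hx, hc.sum_divisors_mul] at h1
  set a := 2 ^ (j + 1) with ha
  have ha2 : 2 ≤ a := by
    rw [ha, pow_succ]; have := Nat.one_le_two_pow (n := j); omega
  have hsa : ∑ d ∈ a.divisors, d = 2 * a - 1 := by
    rw [ha, Nat.sum_divisors_prime_pow Nat.prime_two, Nat.geomSum_eq (le_refl 2)]
    rw [pow_succ _ (j + 1)]
    omega
  rw [hsa] at h1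
  have hdv : 2 * a - 1 ∣ m := by
    have h2 : 2 * a - 1 ∣ (2 * a) * m := ⟨_, by rw [mul_assoc, ← h1]⟩
    refine Nat.Coprime.dvd_of_dvd_mul_left ?_ h2
    have : Nat.Coprime (2 * a - 1) (2 * a - 1 + 1) := by simp
    rwa [Nat.sub_add_cancel (by omega)] at this
  obtain ⟨t, ht⟩ := hdv
  have ht0 : 0 < t := by
    rcases Nat.eq_zero_or_pos t with h0 | h0
    · rw [h0] at ht; omega
    · exact h0
  obtain ⟨w, hw⟩ : ∃ w, 2 * a = w + 1 := ⟨2 * a - 1, by omega⟩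
  have hw' : 2 * a - 1 = w := by omega
  rw [hw'] at h1 ht
  have hw3 : 3 ≤ w := by omega
  have hs : ∑ d ∈ m.divisors, d = m + t := by
    have : w * ∑ d ∈ m.divisors, d = w * (m + t) := by
      rw [h1, ← mul_assoc, hw, mul_add, ← ht]; ring
    exact Nat.eq_of_mul_eq_mul_left (by omega) this
  have htm : t < m := by rw [ht]; nlinarith
  have hp := Nat.sum_divisors_eq_sum_properDivisors_add_self (n := m)
  have hpt : ∑ i ∈ m.properDivisors, i = t := by omega
  have hcases := Nat.sum_properDivisors_dvd (n := m) (by rw [hpt, ht]; exact Dvd.intro_left w rfl)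
  have ht1 : t = 1 := by rcases hcases with h | h <;> omega
  have hmp : m.Prime := Nat.sum_properDivisors_eq_one_iff_prime.1 (by omega)
  have hmw : m = w := by rw [ht, ht1, mul_one]
  have ha3 : a % 3 = 1 ∨ a % 3 = 2 := by
    have : ¬ 3 ∣ a := by
      intro h3
      have := Nat.prime_three.dvd_of_dvd_pow h3
      omega
    omega
  rcases ha3 with h3 | h3
  · right
    refine ⟨a, ?_, ?_, h3⟩
    · rw [hx, hmw, hw']
    · rcases j with _ | j
      · norm_num at ha; omega
      · rw [ha, pow_succ, pow_succ]; omega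
  · left
    have : 3 ∣ m := by omega
    have hm3 := (Nat.prime_dvd_prime_iff_eq Nat.prime_three hmp).1 this
    have : a = 2 := by omega
    rw [hx, this, ← hm3]

theorem stmt_11 (s : ℕ) (hs : s % 3 ≠ 2) (hl : Nat.Prime (96 * s + 91)) :
    ¬ ∃ x y : ℕ, Nat.Perfect x ∧ Nat.Perfect y ∧
      x - y = (24 * s + 23) * (48 * s + 45) := by
  rintro ⟨x, y, hx, hy, hxy⟩
  set δ := (24 * s + 23) * (48 * s + 45) with hδ
  have hδ' : δ = 12 * (96 * s ^ 2 + 182 * s + 86) + 3 := by rw [hδ]; ring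
  have hypos := hy.2
  have hxe : x = y + δ := by omega
  rcases Nat.mod_two_eq_zero_or_one x with hx2 | hx2
  · -- `x` even, `y` odd
    have hy2 : y % 2 = 1 := by omega
    rcases even_perfect x hx hx2 with h6 | ⟨c, hc, hc4, hc3⟩
    · omega
    · have hcs : 24 * s + 23 < c := by
        by_contra hcon
        have : c * (2 * c - 1) ≤ (24 * s + 23) * (48 * s + 45) :=
          Nat.mul_le_mul (by omega) (by omega)
        omega
      obtain ⟨A, hA⟩ : ∃ A, c = A + (24 * s + 23) := ⟨c - (24 * s + 23), by omega⟩
      have hyAB : y = A * (2 * A + (96 * s + 91)) := by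
        have h1 : 2 * c - 1 = 2 * A + 48 * s + 45 := by omega
        have h2 : y + δ = A * (2 * A + (96 * s + 91)) + δ := by
          rw [← hxe, hc, h1, hA, hδ]; ring
        omega
      by_cases hd : (96 * s + 91) ∣ A
      · obtain ⟨A', hA'⟩ := hd
        have hA4 : A' % 4 = 3 := by
          have : A = 4 * (24 * s * A' + 22 * A') + 3 * A' := by rw [hA']; ring
          omega
        have hyf : y = A' * ((96 * s + 91) ^ 2 * (2 * A' + 1)) := by
          rw [hyAB, hA']; ring
        have hyf' : y = (2 * A' + 1) * ((96 * s + 91) ^ 2 * A') := by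
          rw [hyAB, hA']; ring
        have hco : A'.Coprime (2 * A' + 1) := by simp
        by_cases hpA : (96 * s + 91) ∣ A'
        · refine perfect_no3 y _ _ hy hy2 hyf' ?_ (by omega)
          refine Nat.Coprime.mul_right (Nat.Coprime.pow_right _ ?_) hco.symm
          exact (Nat.Coprime.coprime_dvd_left hpA hco).symm
        · refine perfect_no3 y _ _ hy hy2 hyf ?_ hA4
          refine Nat.Coprime.mul_right (Nat.Coprime.pow_right _ ?_) hco
          exact ((Nat.Prime.coprime_iff_not_dvd hl).2 hpA).symm
      · have hcop : A.Coprime (2 * A + (96 * s + 91)) := by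
          have := ((Nat.Prime.coprime_iff_not_dvd hl).2 hd).symm
          simpa using this
        have h1 := perfect_sum hy
        rw [hyAB, hcop.sum_divisors_mul, ← hyAB] at h1
        have h4 := mul_dvd_mul (two_dvd_sum A (by omega) (by omega))
          (two_dvd_sum (2 * A + (96 * s + 91)) (by omega) (by omega))
        rw [h1] at h4
        omega
  · -- `x` odd, `y` even
    have hx4 : x % 4 ≠ 3 := fun h => perfect_no3 x x 1 hx hx2 (by simp) (by simp) h
    rcases even_perfect y hy (by omega) with h6 | ⟨c, hc, hc4, hc3⟩
    · refine perfect_no3 x 3 ((24 * s + 23) * (16 * s + 15) + 2) hx hx2 ?_ ?_ (by norm_num)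
      · rw [hxe, h6, hδ]; ring
      · rw [Nat.Prime.coprime_iff_not_dvd Nat.prime_three]
        have : (24 * s + 23) * (16 * s + 15) + 2 = 3 * (128 * s ^ 2 + 242 * s + 115) + 2 * (s + 1) := by
          ring
        rw [this]
        omega
    · have : 4 ∣ y := hc ▸ (Nat.dvd_of_mod_eq_zero hc4).mul_right _
      omega
end

section
/- Let s be a natural number with s ≢ 2 (mod 3), let m = 12s + 11, b = 4m + 2 = 48s + 46, and δ = b(b-1)/2 = (24s+23)(48s+45). If n and n + δ are both perfect numbers, then n is odd and n + δ is even. -/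
theorem aux_mod_four (N : ℕ) (h : N % 4 = 3) : 4 ∣ ∑ d ∈ N.divisors, d := by
  have h0 : N ≠ 0 := by rintro rfl; simp at h
  have key : ∀ d ∈ N.divisors, (d + N / d) % 4 = 0 ∧ N / d ≠ d := by
    intro d hd
    obtain ⟨e, rfl⟩ := Nat.dvd_of_mem_divisors hd
    have hd0 : 0 < d := Nat.pos_of_mem_divisors hd
    rw [Nat.mul_div_cancel_left _ hd0]
    have h1 : d % 4 < 4 := Nat.mod_lt _ (by norm_num)
    have h2 : e % 4 < 4 := Nat.mod_lt _ (by norm_num)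
    rw [Nat.mul_mod] at h
    generalize hx : d % 4 = x at *
    generalize hy : e % 4 = y at *
    interval_cases x <;> interval_cases y <;> simp at h <;>
      exact ⟨by omega, by rintro rfl; omega⟩
  rw [← ZMod.natCast_eq_zero_iff]
  push_cast
  refine Finset.sum_involution (fun d _ => N / d) ?_ ?_ ?_ ?_
  · intro d hd
    have := Nat.dvd_of_mod_eq_zero (key d hd).1
    rw [← ZMod.natCast_eq_zero_iff] at this
    exact_mod_cast this
  · intro d hd _
    exact (key d hd).2
  · intro d hd
    exact Nat.mem_divisors.2 ⟨Nat.div_dvd_of_dvd (Nat.dvd_of_mem_divisors hd), h0⟩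
  · intro d hd
    exact Nat.div_div_self (Nat.dvd_of_mem_divisors hd) h0

theorem aux_mul (p k : ℕ) (hp : p.Prime) (h : ¬ p ∣ k) :
    ∑ d ∈ (p * k).divisors, d = (p + 1) * ∑ d ∈ k.divisors, d := by
  rw [Nat.Coprime.sum_divisors_mul ((Nat.Prime.coprime_iff_not_dvd hp).2 h)]
  rw [hp.sum_divisors]

theorem aux_even (n : ℕ) (hn : Nat.Perfect n) (h : n % 4 = 2) : n = 6 := by
  have hpos := hn.2
  have hσ := (Nat.perfect_iff_sum_divisors_eq_two_mul hpos).1 hn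
  obtain ⟨m, rfl⟩ : 2 ∣ n := by omega
  rw [aux_mul 2 m Nat.prime_two (by omega)] at hσ
  obtain ⟨k, rfl⟩ : 3 ∣ m := by omega
  by_contra hk
  have hsub : ({1, k, 2 * k, 3 * k} : Finset ℕ) ⊆ (2 * (3 * k)).properDivisors := by
    intro x hx
    simp only [Finset.mem_insert, Finset.mem_singleton] at hx
    rw [Nat.mem_properDivisors]
    rcases hx with rfl | rfl | rfl | rfl
    · exact ⟨one_dvd _, by omega⟩
    · exact ⟨⟨6, by ring⟩, by omega⟩
    · exact ⟨⟨3, by ring⟩, by omega⟩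
    · exact ⟨⟨2, by ring⟩, by omega⟩
  have hle := Finset.sum_le_sum_of_subset (f := fun x : ℕ => x) hsub
  have e := hn.1
  rw [Finset.sum_insert, Finset.sum_insert, Finset.sum_insert, Finset.sum_singleton] at hle
  · omega
  all_goals simp only [Finset.mem_insert, Finset.mem_singleton]; omega

theorem stmt_13 (s n : ℕ) (hs : s % 3 ≠ 2)
    (hn : Nat.Perfect n) (hnδ : Nat.Perfect (n + (24 * s + 23) * (48 * s + 45))) :
    Odd n ∧ Even (n + (24 * s + 23) * (48 * s + 45)) := by
  obtain ⟨t, ht⟩ : ∃ t, t = 32 * (s * s) := ⟨_, rfl⟩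
  have e : (24 * s + 23) * (48 * s + 45) = 36 * t + 2184 * s + 1035 := by rw [ht]; ring
  have hσ := (Nat.perfect_iff_sum_divisors_eq_two_mul hnδ.2).1 hnδ
  rw [e] at *
  have hodd : Odd n := by
    by_contra hne
    rw [Nat.not_odd_iff] at hne
    by_cases h4 : n % 4 = 2
    · have h6 := aux_even n hn h4
      subst h6
      obtain ⟨k, hk'⟩ : 3 ∣ 6 + (36 * t + 2184 * s + 1035) := by omega
      rw [hk', aux_mul 3 k Nat.prime_three (by omega)] at hσ
      omega
    · have := aux_mod_four (n + (36 * t + 2184 * s + 1035)) (by omega)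
      omega
  refine ⟨hodd, ?_⟩
  rw [Nat.odd_iff] at hodd
  rw [Nat.even_iff]
  omega
end

section
/- Let s be a natural number with s ≢ 2 (mod 3), let m = 12s + 11 and δ = (24s+23)(48s+45). If n and n + δ are both perfect numbers, then n is odd and there exists a prime p such that 2^p - 1 is prime, n + δ = 2^(p-1)·(2^p - 1), and n = (2^(p-1) - (2m+1))·(2^p + 4m + 1). -/
lemma aux_even_perfect {n : ℕ} (ev : Even n) (perf : Nat.Perfect n) :
    ∃ k : ℕ, (2 ^ (k + 1) - 1).Prime ∧ n = 2 ^ k * (2 ^ (k + 1) - 1) := by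
  have hpos := perf.2
  obtain ⟨k, m, hm, hn⟩ := Nat.exists_eq_two_pow_mul_odd hpos.ne'
  have hcop : Nat.Coprime (2 ^ k) m := (Nat.coprime_two_left.mpr hm).pow_left _
  have hsum := (Nat.perfect_iff_sum_divisors_eq_two_mul hpos).mp perf
  have hk : k ≠ 0 := by
    rintro rfl
    simp at hn
    rw [hn] at ev
    exact (Nat.not_even_iff_odd.mpr hm) ev
  have hsig : ∑ d ∈ (2 ^ k).divisors, d = 2 ^ (k + 1) - 1 := by
    rw [Nat.sum_divisors_prime_pow Nat.prime_two]
    exact Nat.geomSum_eq (le_refl 2) (k + 1) |>.trans (by simp)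
  rw [hn, hcop.sum_divisors_mul, hsig, ← mul_assoc, ← pow_succ'] at hsum
  have h4 : 4 ≤ 2 ^ (k + 1) := by
    calc 4 = 2 ^ 2 := by norm_num
      _ ≤ 2 ^ (k + 1) := Nat.pow_le_pow_right (by norm_num) (by omega)
  obtain ⟨M, hM⟩ : ∃ M, 2 ^ (k + 1) = M + 1 := ⟨2 ^ (k + 1) - 1, by omega⟩
  rw [hM] at hsum h4
  simp only [Nat.add_sub_cancel] at hsum
  have hdvd : M ∣ m := by
    have hc : Nat.Coprime M (M + 1) := by simp
    exact hc.dvd_of_dvd_mul_left (Dvd.intro _ hsum)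
  obtain ⟨j, rfl⟩ := hdvd
  have hMpos : 0 < M := by omega
  have h : ∑ d ∈ (M * j).divisors, d = (M + 1) * j := by
    apply Nat.eq_of_mul_eq_mul_left hMpos
    rw [hsum]; ring
  rw [Nat.sum_divisors_eq_sum_properDivisors_add_self] at h
  have hj : ∑ d ∈ (M * j).properDivisors, d = j := by linarith
  have hj0 : 0 < j := by
    rcases Nat.eq_zero_or_pos j with rfl | h0
    · simp at hm
    · exact h0
  rcases Nat.sum_properDivisors_dvd (n := M * j) (by rw [hj]; exact Dvd.intro_left M rfl) with h1 | h1
  · have j1 : j = 1 := hj.symm.trans h1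
    subst j1
    rw [mul_one, Nat.sum_properDivisors_eq_one_iff_prime] at h1
    exact ⟨k, by rw [hM]; simpa using h1, by rw [hM]; simpa using hn⟩
  · exfalso
    rw [hj] at h1
    nlinarith

lemma aux_three_mod_four {N : ℕ} (h : N % 4 = 3) : 4 ∣ ∑ d ∈ N.divisors, d := by
  have hN : N ≠ 0 := by omega
  rw [← ZMod.natCast_eq_zero_iff, Nat.cast_sum]
  have key : ∀ a b : ZMod 4, a * b = 3 → a + b = 0 ∧ a ≠ b := by decide
  have hc : ((N : ℕ) : ZMod 4) = 3 := by
    have : ((N : ℕ) : ZMod 4) = ((3 : ℕ) : ZMod 4) := (ZMod.natCast_eq_natCast_iff' _ _ _).mpr h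
    simpa using this
  have hk : ∀ d ∈ N.divisors, ((d : ZMod 4) + ((N / d : ℕ) : ZMod 4) = 0 ∧
      (d : ZMod 4) ≠ ((N / d : ℕ) : ZMod 4)) := by
    intro d hd
    apply key
    rw [← Nat.cast_mul, Nat.mul_div_cancel' (Nat.dvd_of_mem_divisors hd), hc]
  refine Finset.sum_involution (fun d _ => N / d) ?_ ?_ ?_ ?_
  · intro d hd; exact (hk d hd).1
  · intro d hd _ he
    exact (hk d hd).2 (by rw [he])
  · intro d hd
    exact Nat.mem_divisors.mpr ⟨Nat.div_dvd_of_dvd (Nat.dvd_of_mem_divisors hd), hN⟩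
  · intro d hd
    exact Nat.div_div_self (Nat.dvd_of_mem_divisors hd) hN

lemma aux_odd_not_four {N : ℕ} (hodd : N % 2 = 1) (hp : Nat.Perfect N) :
    ¬ 4 ∣ ∑ d ∈ N.divisors, d := by
  rw [(Nat.perfect_iff_sum_divisors_eq_two_mul hp.2).mp hp]
  omega

theorem stmt_14 (s n : ℕ) (hs : s % 3 ≠ 2)
    (hn : Nat.Perfect n) (hnδ : Nat.Perfect (n + (24 * s + 23) * (48 * s + 45))) :
    Odd n ∧ ∃ p : ℕ, Nat.Prime p ∧ Nat.Prime (2 ^ p - 1) ∧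
      n + (24 * s + 23) * (48 * s + 45) = 2 ^ (p - 1) * (2 ^ p - 1) ∧
      (n : ℤ) = (2 ^ (p - 1) - (2 * (12 * s + 11 : ℕ) + 1)) *
        (2 ^ p + 4 * (12 * s + 11 : ℕ) + 1) := by
  have hδ : ∃ t, (24 * s + 23) * (48 * s + 45) = 4 * t + 3 :=
    ⟨288 * s ^ 2 + 546 * s + 258, by ring⟩
  rcases Nat.even_or_odd n with he | ho
  · exfalso
    obtain ⟨k, hk, hnk⟩ := aux_even_perfect he hn
    obtain ⟨t, ht⟩ := hδ
    have hodd : (n + (24 * s + 23) * (48 * s + 45)) % 2 = 1 := by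
      obtain ⟨r, hr⟩ := he
      omega
    apply aux_odd_not_four hodd hnδ
    rcases k with _ | _ | k
    · norm_num at hk
    · have h6 : n = 6 := by simpa using hnk
      have hf : n + (24 * s + 23) * (48 * s + 45) =
          3 * (3 * (128 * s ^ 2 + 242 * s + 115) + 2 * s + 2) := by rw [h6]; ring
      rw [hf]
      have hc : Nat.Coprime 3 (3 * (128 * s ^ 2 + 242 * s + 115) + 2 * s + 2) := by
        rw [Nat.Prime.coprime_iff_not_dvd Nat.prime_three]
        omega
      rw [hc.sum_divisors_mul]
      exact Dvd.dvd.mul_right (by decide) _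
    · apply aux_three_mod_four
      have : ∃ r, n = 4 * r := ⟨2 ^ k * (2 ^ (k + 1 + 1 + 1) - 1), by rw [hnk]; ring⟩
      obtain ⟨r, hr⟩ := this
      omega
  · refine ⟨ho, ?_⟩
    have he : Even (n + (24 * s + 23) * (48 * s + 45)) := by
      obtain ⟨t, ht⟩ := hδ
      obtain ⟨r, hr⟩ := ho
      exact ⟨r + 2 * t + 2, by omega⟩
    obtain ⟨k, hk, hnk⟩ := aux_even_perfect he hnδ
    refine ⟨k + 1, ?_, hk, by simpa using hnk, ?_⟩
    · exact Nat.Prime.of_mersenne hk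
    · have h1 : 1 ≤ 2 ^ (k + 1) := Nat.one_le_two_pow
      zify [h1] at hnk
      simp only [Nat.add_sub_cancel]
      push_cast
      rw [pow_succ] at *
      linear_combination hnk
end
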